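/- Let Φ be a translation-equivariant matching rule that matches maximally within clumps. Then for every integer k ≥ 1, the probability that the origin is k-bad equals E[ (1/|L_k|) · |Σ_{x ∈ L_k} (2γ(x) − 1)| ] (the k-clump L_k of the origin is ℙ-a.s. finite and contains the origin, so the integrand is a.s. well defined). -/

import Mathlib

open MeasureTheory ENNReal

noncomputable section

/-- Sites: the lattice `ℤ^d`. -/
abbrev Site (d : ℕ) := Fin d → ℤ

/-- Configurations: elements of `{0,1}^{ℤ^d}`, encoded with `Bool`. -/
abbrev Config (d : ℕ) := Site d → Bool

/-- The translation `θ^z` acting on configurations: `(θ^z γ)(x) = γ(x - z)`. -/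
def shiftCfg {d : ℕ} (z : Site d) (γ : Config d) : Config d := fun x => γ (x - z)

/-- `φ` is a matching on `γ`: an involutive bijection matching ones to zeros. -/
def IsMatching {d : ℕ} (γ : Config d) (φ : Site d → Site d) : Prop :=
  Function.Bijective φ ∧ (∀ x, φ (φ x) = x) ∧ ∀ x, γ (φ x) = !(γ x)

/-- `Φ` is a matching rule with respect to the measure `P`. -/
def IsMatchingRule {d : ℕ} (P : Measure (Config d)) (Φ : Config d → Site d → Site d) : Prop :=
  (∀ x : Site d, Measurable fun γ => Φ γ x) ∧ ∀ᵐ γ ∂P, IsMatching γ (Φ γ)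

/-- `Φ` is translation-equivariant with respect to `P`. -/
def IsEquivariant {d : ℕ} (P : Measure (Config d)) (Φ : Config d → Site d → Site d) : Prop :=
  ∀ z x : Site d, ∀ᵐ γ ∂P, Φ (shiftCfg z γ) (x + z) = Φ γ x + z

/-- `P` is the product measure with i.i.d. Bernoulli(1/2) coordinates, characterized by
its values on cylinder events. -/
def IsBernoulliHalfProduct {d : ℕ} (P : Measure (Config d)) : Prop :=
  IsProbabilityMeasure P ∧
    ∀ (s : Finset (Site d)) (f : Site d → Bool),
      P {γ | ∀ x ∈ s, γ x = f x} = (1 / 2 : ℝ≥0∞) ^ s.card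

/-- `Z_Φ(γ) = ‖Φ(γ, 0)‖`, the `ℓ^∞` distance from the origin to its partner. -/
def ZΦ {d : ℕ} (Φ : Config d → Site d → Site d) (γ : Config d) : ℝ := ‖Φ γ 0‖

/-- Embedding of the lattice in `ℝ^d`. -/
def toR {d : ℕ} (x : Site d) : Fin d → ℝ := fun i => (x i : ℝ)

/-- The first standard basis vector `e₁`. -/
def e1 (d : ℕ) : Site d := fun i => if (i : ℕ) = 0 then 1 else 0

/-- `x` is a `k`-seed for `γ`. -/
def IsSeed {d : ℕ} (γ : Config d) (k : ℕ) (x : Site d) : Prop :=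
  γ x = true ∧ ∀ n : ℕ, 1 ≤ n → n ≤ k - 1 → γ (x + (n : ℤ) • e1 d) = false

/-- `r_k = (2^k k²)^{1/d} + 1/2`. -/
def rr (d k : ℕ) : ℝ := ((2 : ℝ) ^ k * (k : ℝ) ^ 2) ^ ((d : ℝ)⁻¹) + 1 / 2

/-- The shift `s_k = ⌊100 r_k⌋ e₁`. -/
def ss (d k : ℕ) : Site d := ⌊(100 : ℝ) * rr d k⌋ • e1 d

/-- `W_k(γ)`: the union of all `k`-cutters. -/
def cutters {d : ℕ} (γ : Config d) (k : ℕ) : Set (Fin d → ℝ) :=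
  ⋃ x ∈ {x : Site d | IsSeed γ k (x - ss d k)}, {y : Fin d → ℝ | ‖y - toR x‖ = rr d k}

/-- The `k`-blob containing the point `p ∈ ℝ^d`: the connected component of `p` in the
complement of all `j`-cutters with `j > k`. -/
def blob {d : ℕ} (γ : Config d) (k : ℕ) (p : Fin d → ℝ) : Set (Fin d → ℝ) :=
  connectedComponentIn (⋃ j ∈ {j : ℕ | k < j}, cutters γ j)ᶜ p

/-- The `k`-clump of a site `x`: the lattice points of the `k`-blob containing `x`. -/
def clump {d : ℕ} (γ : Config d) (k : ℕ) (x : Site d) : Set (Site d) :=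
  {y : Site d | toR y ∈ blob γ k (toR x)}

/-- The event `E_k`: the cube `S(-s_k, r_k - 1)` contains a `k`-seed. -/
def Ek (d k : ℕ) : Set (Config d) :=
  {γ | ∃ y : Site d, IsSeed γ k y ∧ ‖toR y + toR (ss d k)‖ ≤ rr d k - 1}

/-- A `k`-seed lying in the annulus `S(-s_k, r_k + s) \ S(-s_k, r_k - s)`. -/
def SeedInAnnulus {d : ℕ} (γ : Config d) (k : ℕ) (s : ℝ) (y : Site d) : Prop :=
  IsSeed γ k y ∧ ‖toR y + toR (ss d k)‖ ≤ rr d k + s ∧ rr d k - s < ‖toR y + toR (ss d k)‖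

/-- The event `U_k(s)`: `S(-s_k, r_k + s) \ S(-s_k, r_k - s)` contains a `k`-seed. -/
def Uk (d : ℕ) (k : ℕ) (s : ℝ) : Set (Config d) :=
  {γ | ∃ y : Site d, SeedInAnnulus γ k s y}

/-- The event `C_k(s) = ∪_{j ≥ k} U_j(s)`. -/
def Ck (d : ℕ) (k : ℕ) (s : ℝ) : Set (Config d) :=
  {γ | ∃ j : ℕ, k ≤ j ∧ γ ∈ Uk d j s}

/-- `±1`-valued spin `2γ(x) - 1`. -/
def pm1 {d : ℕ} (γ : Config d) (y : Site d) : ℤ := if γ y then 1 else -1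

/-- `Φ` matches maximally within clumps: a.s. every clump is finite and the number of
sites of each `k`-clump `L` matched outside `L` equals `|Σ_{x ∈ L} (2γ(x) - 1)|`. -/
def MatchesMaximally {d : ℕ} (P : Measure (Config d))
    (Φ : Config d → Site d → Site d) : Prop :=
  ∀ᵐ γ ∂P, ∀ k : ℕ, 1 ≤ k → ∀ x : Site d,
    (clump γ k x).Finite ∧
      (({y ∈ clump γ k x | Φ γ y ∉ clump γ k x}.ncard : ℤ)
        = |∑ᶠ y ∈ clump γ k x, pm1 γ y|)

/-!
The formula is an instance of the mass transport principle. Let every `k`-bad site spread unit mass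
uniformly over its `k`-clump. The expected mass sent out by the origin is the probability that the
origin is bad, the expected mass it receives is `E[#{bad sites of L_k} / |L_k|]`, and by translation
invariance the two agree; the number of bad sites in `L_k` is given by maximality.

The transport is measurable because almost surely only finitely many cutters meet a given ball: the
centres of the `j`-cutters meeting it lie in an annulus of bounded width and radius `r_j`, so their
expected number is at most of order `r_j ^ (d - 1) * 2 ^ (-j)`, hence of order
`j ^ 2 * 2 ^ (-j / d)`, which is summable. Hence the complement of the cutters is open, and two of
its points are in the same component if and only if they are joined by a finite chain of overlapping
sets from a countable basis of connected open sets.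
-/

/-! ### Connected components of random open sets -/

section ReflTransGen

variable {Ω ι : Type*} [MeasurableSpace Ω] {R : Ω → ι → ι → Prop}

theorem measurableSet_isChain (hR : ∀ a b, MeasurableSet {ω | R ω a b}) (l : List ι) :
    MeasurableSet {ω | l.IsChain (R ω)} := by
  induction l using List.twoStepInduction with
  | nil => simp
  | singleton a => simp
  | cons_cons a b l _ ih =>
    simp only [List.isChain_cons_cons]
    exact (hR a b).inter (ih b)

theorem measurableSet_reflTransGen [Countable ι] (hR : ∀ a b, MeasurableSet {ω | R ω a b})
    (a b : ι) : MeasurableSet {ω | Relation.ReflTransGen (R ω) a b} := by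
  have h_iff (ω : Ω) : Relation.ReflTransGen (R ω) a b ↔
      ∃ l : List ι, (a :: l).IsChain (R ω) ∧ (a :: l).getLast (List.cons_ne_nil _ _) = b :=
    ⟨List.exists_isChain_cons_of_relationReflTransGen,
      fun ⟨l, hl, hlast⟩ => List.relationReflTransGen_of_exists_isChain_cons l hl hlast⟩
  simp only [h_iff, Set.ofPred_exists]
  exact .iUnion fun l => (measurableSet_isChain hR _).inter (.const _)

end ReflTransGen

section ConnectedComponentIn

variable {X : Type*} [TopologicalSpace X]

/-- Two sets overlap inside `U`: they are contained in `U` and have a common point. Chains of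
overlapping basic open sets describe the connected components of an open set `U`. -/
def OverlapInside (U V W : Set X) : Prop := V ⊆ U ∧ W ⊆ U ∧ (V ∩ W).Nonempty

theorem subset_connectedComponentIn_of_chain {𝓑 : Set (Set X)}
    (hconn : ∀ V ∈ 𝓑, IsPreconnected V) {U : Set X} {p : X} {V W : 𝓑} (hVU : V.1 ⊆ U)
    (hp : p ∈ V.1) (hVW : Relation.ReflTransGen (fun V W : 𝓑 => OverlapInside U V.1 W.1) V W) :
    W.1 ⊆ connectedComponentIn U p := by
  induction hVW with
  | refl => exact (hconn _ V.2).subset_connectedComponentIn hp hVU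
  | @tail W W' _ hWW' ih =>
    obtain ⟨-, hW'U, x, hxW, hxW'⟩ := hWW'
    rw [connectedComponentIn_eq (ih hxW)]
    exact (hconn _ W'.2).subset_connectedComponentIn hxW' hW'U

theorem mem_connectedComponentIn_iff_exists_chain {𝓑 : Set (Set X)}
    (h𝓑 : TopologicalSpace.IsTopologicalBasis 𝓑) (hconn : ∀ V ∈ 𝓑, IsPreconnected V)
    {U : Set X} (hU : IsOpen U) {p q : X} :
    q ∈ connectedComponentIn U p ↔ ∃ V W : 𝓑, V.1 ⊆ U ∧ p ∈ V.1 ∧ q ∈ W.1 ∧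
      Relation.ReflTransGen (fun V W : 𝓑 => OverlapInside U V.1 W.1) V W := by
  refine ⟨fun hq => ?_, fun ⟨V, W, hVU, hp, hq, hVW⟩ =>
    subset_connectedComponentIn_of_chain hconn hVU hp hVW hq⟩
  have hp : p ∈ U := connectedComponentIn_nonempty_iff.1 ⟨q, hq⟩
  have hpreconn : IsPreconnected (connectedComponentIn U p) := isPreconnected_connectedComponentIn
  refine hpreconn.induction₂' (fun x y => ∃ V W : 𝓑, V.1 ⊆ U ∧ x ∈ V.1 ∧ y ∈ W.1 ∧
      Relation.ReflTransGen (fun V W : 𝓑 => OverlapInside U V.1 W.1) V W)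
    (fun x hx => ?_) ?_ (mem_connectedComponentIn hp) hq
  · obtain ⟨V, hV, hxV, hVU⟩ := h𝓑.exists_subset_of_mem_open (connectedComponentIn_subset U p hx) hU
    filter_upwards [mem_nhdsWithin_of_mem_nhds ((h𝓑.isOpen hV).mem_nhds hxV)] with y hyV
    exact ⟨⟨⟨V, hV⟩, ⟨V, hV⟩, hVU, hxV, hyV, .refl⟩, ⟨V, hV⟩, ⟨V, hV⟩, hVU, hyV, hxV, .refl⟩
  · rintro x y z - - -
      ⟨V, W, hVU, hxV, hyW, hVW⟩ ⟨V', W', hV'U, hyV', hzW', hVW'⟩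
    have hWU : W.1 ⊆ U := (subset_connectedComponentIn_of_chain hconn hVU hxV hVW).trans
      (connectedComponentIn_subset U x)
    exact ⟨V, W', hVU, hxV, hzW', (hVW.tail ⟨hWU, hV'U, y, hyW, hyV'⟩).trans hVW'⟩

theorem exists_countable_isTopologicalBasis_isPreconnected (X : Type*) [TopologicalSpace X]
    [LocallyConnectedSpace X] [SecondCountableTopology X] :
    ∃ 𝓑 : Set (Set X), 𝓑.Countable ∧ TopologicalSpace.IsTopologicalBasis 𝓑 ∧
      ∀ V ∈ 𝓑, IsPreconnected V := by
  have hbasis : TopologicalSpace.IsTopologicalBasis {V : Set X | IsOpen V ∧ IsPreconnected V} := by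
    refine TopologicalSpace.isTopologicalBasis_of_isOpen_of_nhds (fun V hV => hV.1) ?_
    intro x U hx hU
    obtain ⟨V, hVU, hV, hxV, hconn⟩ :=
      locallyConnectedSpace_iff_subsets_isOpen_isConnected.1 ‹_› x U (hU.mem_nhds hx)
    exact ⟨V, ⟨hV, hconn.isPreconnected⟩, hxV, hVU⟩
  obtain ⟨𝓑, hsub, hcount, h𝓑⟩ := hbasis.exists_countable
  exact ⟨𝓑, hcount, h𝓑, fun V hV => (hsub hV).2⟩

theorem nullMeasurableSet_mem_connectedComponentIn [LocallyConnectedSpace X]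
    [SecondCountableTopology X] {Ω : Type*} [MeasurableSpace Ω] {μ : Measure Ω} {U : Ω → Set X}
    (hopen : ∀ᵐ ω ∂μ, IsOpen (U ω)) (hmeas : ∀ V, MeasurableSet {ω | V ⊆ U ω}) (p q : X) :
    NullMeasurableSet {ω | q ∈ connectedComponentIn (U ω) p} μ := by
  obtain ⟨𝓑, hcount, h𝓑, hconn⟩ := exists_countable_isTopologicalBasis_isPreconnected X
  have := hcount.to_subtype
  have hchain : MeasurableSet {ω | ∃ V W : 𝓑, V.1 ⊆ U ω ∧ p ∈ V.1 ∧ q ∈ W.1 ∧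
      Relation.ReflTransGen (fun V W : 𝓑 => OverlapInside (U ω) V.1 W.1) V W} := by
    simp only [Set.ofPred_exists]
    refine .iUnion fun V => .iUnion fun W => (hmeas V).inter <| .inter (.const _) <|
      .inter (.const _) <| measurableSet_reflTransGen (fun V W => ?_) V W
    exact (hmeas V).inter ((hmeas W).inter (.const _))
  refine hchain.nullMeasurableSet.congr ?_
  filter_upwards [hopen] with ω hω
  exact propext (mem_connectedComponentIn_iff_exists_chain h𝓑 hconn hω).symm

end ConnectedComponentIn

/-! ### Mass transport -/

section MassTransport

variable {G Ω : Type*} [AddGroup G] [Countable G] [MeasurableSpace Ω] {μ : Measure Ω}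
  {τ : G → Ω → Ω}

theorem lintegral_tsum_mass_transport (hτ : ∀ z, MeasurePreserving (τ z) μ μ)
    {m : G → G → Ω → ℝ≥0∞} (hm : ∀ x y, AEMeasurable (m x y) μ)
    (hequiv : ∀ z x y, ∀ᵐ ω ∂μ, m (x + z) (y + z) (τ z ω) = m x y ω) :
    ∫⁻ ω, ∑' y, m 0 y ω ∂μ = ∫⁻ ω, ∑' x, m x 0 ω ∂μ := by
  have hshift (y : G) : ∫⁻ ω, m 0 y ω ∂μ = ∫⁻ ω, m (-y) 0 ω ∂μ := calc
    ∫⁻ ω, m 0 y ω ∂μ = ∫⁻ ω, m (-y) 0 (τ (-y) ω) ∂μ := by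
      refine lintegral_congr_ae ?_
      filter_upwards [hequiv (-y) 0 y] with ω hω
      rw [← hω, zero_add, add_neg_cancel]
    _ = ∫⁻ ω, m (-y) 0 ω ∂(μ.map (τ (-y))) :=
      (lintegral_map' ((hτ _).map_eq.symm ▸ hm _ _) (hτ _).aemeasurable).symm
    _ = ∫⁻ ω, m (-y) 0 ω ∂μ := by rw [(hτ _).map_eq]
  calc ∫⁻ ω, ∑' y, m 0 y ω ∂μ
      = ∑' y, ∫⁻ ω, m 0 y ω ∂μ := lintegral_tsum (hm 0)
    _ = ∑' y, ∫⁻ ω, m (-y) 0 ω ∂μ := tsum_congr hshift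
    _ = ∑' x, ∫⁻ ω, m x 0 ω ∂μ := (Equiv.neg G).tsum_eq fun x => ∫⁻ ω, m x 0 ω ∂μ
    _ = ∫⁻ ω, ∑' x, m x 0 ω ∂μ := (lintegral_tsum (hm · 0)).symm

end MassTransport

section EqualShare

variable {α : Type*}

/-- The amount of mass sent from `x` to `y` when every point of `B` spreads a unit mass evenly
over its class of the equivalence relation `c`. -/
def equalShare (c : Setoid α) (B : Set α) (x y : α) : ℝ≥0∞ :=
  {z | x ∈ B ∧ c x z}.indicator (fun _ => ({z | c x z}.encard : ℝ≥0∞)⁻¹) y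

theorem tsum_equalShare_right {c : Setoid α} (B : Set α) {x : α} (hfin : {z | c x z}.Finite) :
    ∑' y, equalShare c B x y = B.indicator 1 x := by
  by_cases hx : x ∈ B
  · calc ∑' y, equalShare c B x y
        = ∑' y, {z | c x z}.indicator (fun _ => ({z | c x z}.encard : ℝ≥0∞)⁻¹) y := by
          simp only [equalShare, hx, true_and]
      _ = {z | c x z}.encard * ({z | c x z}.encard : ℝ≥0∞)⁻¹ := by
          rw [← tsum_subtype, ENNReal.tsum_set_const]
      _ = B.indicator 1 x := by
          rw [Set.indicator_of_mem hx, Pi.one_apply]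
          refine ENNReal.mul_inv_cancel ?_ ?_
          · simpa [Set.eq_empty_iff_forall_notMem] using ⟨x, c.refl x⟩
          · simpa using hfin
  · simp [equalShare, hx]

theorem tsum_equalShare_left (c : Setoid α) (B : Set α) (y : α) :
    ∑' x, equalShare c B x y = {x ∈ B | c y x}.encard * ({z | c y z}.encard : ℝ≥0∞)⁻¹ := by
  have hshare (x : α) : equalShare c B x y =
      {x ∈ B | c y x}.indicator (fun _ => ({z | c y z}.encard : ℝ≥0∞)⁻¹) x := by
    classical
    by_cases hxy : c y x
    · have hclass : {z | c x z} = {z | c y z} :=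
        Set.ext fun z => ⟨c.trans hxy, c.trans (c.symm hxy)⟩
      simp only [equalShare, Set.indicator_apply, Set.mem_ofPred_eq, hxy, c.symm hxy, hclass]
    · have hyx : ¬ c x y := fun h => hxy (c.symm h)
      simp only [equalShare, Set.indicator_apply, Set.mem_ofPred_eq, hxy, hyx, and_false, if_false]
  rw [tsum_congr hshare, ← tsum_subtype, ENNReal.tsum_set_const]

theorem equalShare_congr {β : Type*} {c : Setoid α} {c' : Setoid β} {B : Set α} {B' : Set β}
    (e : α ≃ β) (hc : ∀ x y, c' (e x) (e y) ↔ c x y) {x : α} (hB : e x ∈ B' ↔ x ∈ B) (y : α) :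
    equalShare c' B' (e x) (e y) = equalShare c B x y := by
  have hclass : {z | c' (e x) z}.encard = {z | c x z}.encard := by
    rw [← e.injective.encard_image]
    congr 1
    ext z
    obtain ⟨w, rfl⟩ := e.surjective z
    simp [hc]
  classical
  simp only [equalShare, Set.indicator_apply, Set.mem_ofPred_eq, hc, hB, hclass]

end EqualShare

section EquivariantPartition

variable {Ω : Type*} [MeasurableSpace Ω] {μ : Measure Ω}

theorem aemeasurable_encard {α : Type*} [Countable α] {S : Ω → Set α}
    (hS : ∀ x, NullMeasurableSet {ω | x ∈ S ω} μ) :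
    AEMeasurable (fun ω => ((S ω).encard : ℝ≥0∞)) μ := by
  have htsum (ω : Ω) :
      ((S ω).encard : ℝ≥0∞) = ∑' x, {ω | x ∈ S ω}.indicator (fun _ => (1 : ℝ≥0∞)) ω := by
    rw [← ENNReal.tsum_set_one, tsum_subtype _ fun _ => (1 : ℝ≥0∞)]
    rfl
  simp only [htsum]
  exact AEMeasurable.tsum fun x => aemeasurable_const.indicator₀ (hS x)

theorem aemeasurable_equalShare {α : Type*} [Countable α] {C : Ω → Setoid α} {B : Ω → Set α}
    (hC : ∀ x y, NullMeasurableSet {ω | C ω x y} μ) (hB : ∀ x, NullMeasurableSet {ω | x ∈ B ω} μ)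
    (x y : α) : AEMeasurable (fun ω => equalShare (C ω) (B ω) x y) μ :=
  ((aemeasurable_encard (hC x)).inv.indicator₀ ((hB x).inter (hC x y)) :)

variable {G : Type*} [AddGroup G] [Countable G] {τ : G → Ω → Ω}

theorem measure_mem_eq_lintegral_encard (hτ : ∀ z, MeasurePreserving (τ z) μ μ)
    {C : Ω → Setoid G} {B : Ω → Set G} (hC : ∀ x y, NullMeasurableSet {ω | C ω x y} μ)
    (hB : ∀ x, NullMeasurableSet {ω | x ∈ B ω} μ)
    (hCτ : ∀ z, ∀ᵐ ω ∂μ, ∀ x y, C (τ z ω) (x + z) (y + z) ↔ C ω x y)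
    (hBτ : ∀ z x, ∀ᵐ ω ∂μ, x + z ∈ B (τ z ω) ↔ x ∈ B ω)
    (hfin : ∀ᵐ ω ∂μ, {y | C ω 0 y}.Finite) :
    μ {ω | 0 ∈ B ω} =
      ∫⁻ ω, {x ∈ B ω | C ω 0 x}.encard * ({y | C ω 0 y}.encard : ℝ≥0∞)⁻¹ ∂μ := calc
  μ {ω | 0 ∈ B ω} = ∫⁻ ω, {ω | 0 ∈ B ω}.indicator 1 ω ∂μ := (lintegral_indicator_one₀ (hB 0)).symm
  _ = ∫⁻ ω, ∑' y, equalShare (C ω) (B ω) 0 y ∂μ := by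
    refine lintegral_congr_ae ?_
    filter_upwards [hfin] with ω hω
    exact (tsum_equalShare_right (B ω) hω).symm
  _ = ∫⁻ ω, ∑' x, equalShare (C ω) (B ω) x 0 ∂μ := by
    refine lintegral_tsum_mass_transport hτ (aemeasurable_equalShare hC hB) fun z x y => ?_
    filter_upwards [hCτ z, hBτ z x] with ω hCω hBω
    exact equalShare_congr (Equiv.addRight z) hCω hBω y
  _ = _ := lintegral_congr fun ω => tsum_equalShare_left (C ω) (B ω) 0

theorem measureReal_mem_eq_integral_ncard_div_ncard (hτ : ∀ z, MeasurePreserving (τ z) μ μ)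
    {C : Ω → Setoid G} {B : Ω → Set G} (hC : ∀ x y, NullMeasurableSet {ω | C ω x y} μ)
    (hB : ∀ x, NullMeasurableSet {ω | x ∈ B ω} μ)
    (hCτ : ∀ z, ∀ᵐ ω ∂μ, ∀ x y, C (τ z ω) (x + z) (y + z) ↔ C ω x y)
    (hBτ : ∀ z x, ∀ᵐ ω ∂μ, x + z ∈ B (τ z ω) ↔ x ∈ B ω)
    (hfin : ∀ᵐ ω ∂μ, {y | C ω 0 y}.Finite) :
    μ.real {ω | 0 ∈ B ω} =
      ∫ ω, ({x ∈ B ω | C ω 0 x}.ncard : ℝ) / {y | C ω 0 y}.ncard ∂μ := by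
  have hmeas : AEMeasurable
      (fun ω => ({x ∈ B ω | C ω 0 x}.encard : ℝ≥0∞) * ({y | C ω 0 y}.encard : ℝ≥0∞)⁻¹) μ :=
    (aemeasurable_encard fun x => (hB x).inter (hC 0 x)).mul (aemeasurable_encard (hC 0)).inv
  have hcast : ∀ᵐ ω ∂μ, ({x ∈ B ω | C ω 0 x}.encard : ℝ≥0∞) = ({x ∈ B ω | C ω 0 x}.ncard : ℝ≥0∞) ∧
      ({y | C ω 0 y}.encard : ℝ≥0∞) = ({y | C ω 0 y}.ncard : ℝ≥0∞) ∧ {y | C ω 0 y}.ncard ≠ 0 := by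
    filter_upwards [hfin] with ω hω
    have hsub : {x ∈ B ω | C ω 0 x}.Finite := hω.subset fun x hx => hx.2
    refine ⟨?_, ?_, Set.ncard_ne_zero_of_mem ((C ω).refl 0) hω⟩
    · rw [← hsub.cast_ncard_eq, ENat.toENNReal_coe]
    · rw [← hω.cast_ncard_eq, ENat.toENNReal_coe]
  rw [measureReal_def, measure_mem_eq_lintegral_encard hτ hC hB hCτ hBτ hfin,
    ← integral_toReal hmeas]
  · refine integral_congr_ae ?_
    filter_upwards [hcast] with ω ⟨hnum, hden, _⟩
    simp [hnum, hden, div_eq_mul_inv]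
  · filter_upwards [hcast] with ω ⟨hnum, hden, hne⟩
    rw [hnum, hden]
    exact ENNReal.mul_lt_top (ENNReal.natCast_lt_top _) (by simpa [pos_iff_ne_zero] using hne)

end EquivariantPartition

/-! ### The Bernoulli measure -/

section Bernoulli

variable {d : ℕ} {P : Measure (Config d)}

theorem measurable_shiftCfg (z : Site d) : Measurable (shiftCfg z : Config d → Config d) :=
  measurable_pi_lambda _ fun _ => measurable_pi_apply _

theorem measurableSet_cylinder (s : Finset (Site d)) (f : Config d) :
    MeasurableSet {γ : Config d | ∀ x ∈ s, γ x = f x} := by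
  simp only [Set.ofPred_forall]
  exact s.measurableSet_biInter fun x _ => measurable_pi_apply x (measurableSet_singleton _)

theorem IsBernoulliHalfProduct.ext {Q : Measure (Config d)} (hP : IsBernoulliHalfProduct P)
    (hQ : IsBernoulliHalfProduct Q) : P = Q := by
  have hmarginal {μ : Measure (Config d)} (hμ : IsBernoulliHalfProduct μ) (s : Finset (Site d))
      (f : s → Bool) : μ.map s.restrict {f} = (1 / 2) ^ s.card := by
    rw [Measure.map_apply (Finset.measurable_restrict s) (measurableSet_singleton f),
      ← hμ.2 s fun x => if hx : x ∈ s then f ⟨x, hx⟩ else false]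
    congr 1
    ext γ
    simp +contextual [funext_iff]
  have : IsProbabilityMeasure Q := hQ.1
  have (s : Finset (Site d)) : IsFiniteMeasure (Q.map s.restrict) := Measure.isFiniteMeasure_map Q _
  refine IsProjectiveLimit.unique (P := fun s => Q.map s.restrict) (fun s => ?_) fun s => rfl
  exact Measure.ext_of_singleton fun f => (hmarginal hP s f).trans (hmarginal hQ s f).symm

theorem IsBernoulliHalfProduct.map_shiftCfg (hP : IsBernoulliHalfProduct P) (z : Site d) :
    IsBernoulliHalfProduct (P.map (shiftCfg z)) := by
  have := hP.1
  refine ⟨Measure.isProbabilityMeasure_map (measurable_shiftCfg z).aemeasurable, fun s f => ?_⟩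
  have hpreimage : shiftCfg z ⁻¹' {γ : Config d | ∀ x ∈ s, γ x = f x} =
      {γ | ∀ x ∈ s.image (· - z), γ x = f (x + z)} := by
    ext γ
    simp [shiftCfg]
  rw [Measure.map_apply (measurable_shiftCfg z) (measurableSet_cylinder s f), hpreimage, hP.2,
    Finset.card_image_of_injective _ sub_left_injective]

theorem IsBernoulliHalfProduct.measurePreserving_shiftCfg (hP : IsBernoulliHalfProduct P)
    (z : Site d) : MeasurePreserving (shiftCfg z) P P :=
  ⟨measurable_shiftCfg z, (hP.map_shiftCfg z).ext hP⟩

theorem IsBernoulliHalfProduct.measure_isSeed_le (hd : 1 ≤ d) (hP : IsBernoulliHalfProduct P)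
    (j : ℕ) (x : Site d) : P {γ | IsSeed γ j x} ≤ (1 / 2) ^ j := by
  have hinj : Function.Injective fun n : ℕ => x + (n : ℤ) • e1 d := fun n m h => by
    simpa [e1] using congrFun h ⟨0, hd⟩
  let ray : Finset (Site d) := (Finset.range j).image fun n : ℕ => x + (n : ℤ) • e1 d
  have hray : ray.card = j := by
    rw [Finset.card_image_of_injective _ hinj, Finset.card_range]
  calc P {γ | IsSeed γ j x} ≤ P {γ | ∀ y ∈ ray, γ y = decide (y = x)} := by
        refine measure_mono fun γ ⟨hx, hzero⟩ y hy => ?_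
        obtain ⟨n, hn, rfl⟩ := Finset.mem_image.1 hy
        rw [Finset.mem_range] at hn
        obtain rfl | hn0 := Nat.eq_zero_or_pos n
        · simpa using hx
        · have hne : x + (n : ℤ) • e1 d ≠ x := by
            simpa using hinj.ne hn0.ne'
          rw [hzero n hn0 (by omega), decide_eq_false hne]
    _ = (1 / 2) ^ j := by rw [hP.2 ray, hray]

end Bernoulli

/-! ### Counting lattice points -/

section LatticeCounting

variable {ι : Type*} [Fintype ι]

theorem card_filter_piFinset_exists_mem_le [DecidableEq ι] {α : Type*} [DecidableEq α]
    (A S : Finset α) :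
    {x ∈ Fintype.piFinset fun _ : ι => S | ∃ i, x i ∈ A}.card ≤
      Fintype.card ι * A.card * S.card ^ (Fintype.card ι - 1) := by
  have hcover : {x ∈ Fintype.piFinset fun _ : ι => S | ∃ i, x i ∈ A} ⊆
      (Finset.univ ×ˢ A).biUnion fun ia =>
        {x ∈ Fintype.piFinset fun _ : ι => S | x ia.1 = ia.2} := fun x hx => by
    obtain ⟨hxS, i, hi⟩ := Finset.mem_filter.1 hx
    exact Finset.mem_biUnion.2
      ⟨(i, x i), by simpa using hi, Finset.mem_filter.2 ⟨hxS, rfl⟩⟩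
  refine (Finset.card_le_card hcover).trans <|
    (Finset.card_biUnion_le_card_mul _ _ (S.card ^ (Fintype.card ι - 1)) fun ia _ => ?_).trans_eq
      (by simp)
  rw [Fintype.card_filter_piFinset_const]
  split_ifs <;> simp

theorem exists_natAbs_eq_norm [Nonempty ι] (x : ι → ℤ) : ∃ i, ‖x‖ = (x i).natAbs := by
  obtain ⟨i, hi⟩ := Finite.exists_max fun i => ‖x i‖
  refine ⟨i, ?_⟩
  rw [Nat.cast_natAbs, Int.cast_abs, ← Int.norm_eq_abs]
  exact ((pi_norm_le_iff_of_nonneg (norm_nonneg _)).2 hi).antisymm (norm_le_pi_norm x i)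

theorem ncard_sphere_int_pi_le [Nonempty ι] (n : ℕ) :
    {x : ι → ℤ | ‖x‖ = n}.ncard ≤
      Fintype.card ι * 2 * (2 * n + 1) ^ (Fintype.card ι - 1) := by
  classical
  let cube : Finset ℤ := Finset.Icc (-n) n
  let faces : Finset ℤ := {(n : ℤ), -(n : ℤ)}
  have hsub : {x : ι → ℤ | ‖x‖ = n} ⊆
      ({x ∈ Fintype.piFinset fun _ : ι => cube | ∃ i, x i ∈ faces} : Finset (ι → ℤ)) := by
    intro x (hx : ‖x‖ = n)
    have hbox (l : ι) : |x l| ≤ n := by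
      have hl : ‖x l‖ ≤ n := hx ▸ norm_le_pi_norm x l
      rw [Int.norm_eq_abs] at hl
      exact_mod_cast hl
    obtain ⟨i, hi⟩ := exists_natAbs_eq_norm x
    have hin : (x i).natAbs = n := by exact_mod_cast hi.symm.trans hx
    simp only [Finset.coe_filter, Fintype.mem_piFinset, Set.mem_ofPred_eq, cube, faces,
      Finset.mem_Icc, Finset.mem_insert, Finset.mem_singleton]
    exact ⟨fun l => abs_le.1 (hbox l), i, Int.natAbs_eq_iff.1 hin⟩
  calc {x : ι → ℤ | ‖x‖ = n}.ncard
      ≤ {x ∈ Fintype.piFinset fun _ : ι => cube | ∃ i, x i ∈ faces}.card :=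
        (Set.ncard_le_ncard hsub (Finset.finite_toSet _)).trans_eq (Set.ncard_coe_finset _)
    _ ≤ Fintype.card ι * faces.card * cube.card ^ (Fintype.card ι - 1) :=
        card_filter_piFinset_exists_mem_le _ _
    _ ≤ Fintype.card ι * 2 * (2 * n + 1) ^ (Fintype.card ι - 1) := by
        have hcube : cube.card = 2 * n + 1 := by simp only [cube, Int.card_Icc]; omega
        rw [hcube]
        gcongr
        exact Finset.card_le_two

/-- The lattice points whose distance to the sphere of radius `r` is at most `R`: the possible
centres of spheres of radius `r` meeting the ball of radius `R` about the origin. -/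
def latticeAnnulus (ι : Type*) [Fintype ι] (r R : ℝ) : Set (ι → ℤ) := {x | |‖x‖ - r| ≤ R}

theorem finite_latticeAnnulus (r R : ℝ) : (latticeAnnulus ι r R).Finite := by
  refine (isCompact_closedBall (0 : ι → ℤ) (r + R)).finite_of_discrete.subset fun x hx => ?_
  have hx' : |‖x‖ - r| ≤ R := hx
  rw [mem_closedBall_zero_iff]
  linarith [le_abs_self (‖x‖ - r)]

theorem card_Icc_ceil_floor_le {a b : ℝ} (hab : a ≤ b) (hb : 0 ≤ b) :
    ((Finset.Icc ⌈a⌉₊ ⌊b⌋₊).card : ℝ) ≤ b - a + 1 := by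
  have hfloor : (⌊b⌋₊ : ℝ) ≤ b := Nat.floor_le hb
  have hceil : a ≤ ⌈a⌉₊ := Nat.le_ceil a
  rw [Nat.card_Icc]
  obtain h | h := le_total (⌊b⌋₊ + 1) ⌈a⌉₊
  · rw [Nat.sub_eq_zero_of_le h, Nat.cast_zero]
    linarith
  · push_cast [Nat.cast_sub h]
    linarith

theorem ncard_latticeAnnulus_le [Nonempty ι] {r R : ℝ} (hr : 0 ≤ r) (hR : 0 ≤ R) :
    ((latticeAnnulus ι r R).ncard : ℝ) ≤
      (2 * R + 1) * (Fintype.card ι * 2 * (2 * (r + R) + 1) ^ (Fintype.card ι - 1)) := by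
  let radii : Finset ℕ := Finset.Icc ⌈r - R⌉₊ ⌊r + R⌋₊
  have hradii : (radii.card : ℝ) ≤ 2 * R + 1 :=
    (card_Icc_ceil_floor_le (by linarith) (by positivity)).trans_eq (by ring)
  have hcover : latticeAnnulus ι r R ⊆ ⋃ n ∈ radii, {x : ι → ℤ | ‖x‖ = n} := fun x hx => by
    obtain ⟨i, hi⟩ := exists_natAbs_eq_norm x
    obtain ⟨hlower, hupper⟩ := abs_le.1 (hi ▸ hx : |((x i).natAbs : ℝ) - r| ≤ R)
    refine Set.mem_biUnion (x := (x i).natAbs) (Finset.mem_Icc.2 ⟨?_, ?_⟩) hi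
    · exact Nat.ceil_le.2 (by linarith)
    · exact Nat.le_floor (by linarith)
  have hsphere : ∀ n ∈ radii, ({x : ι → ℤ | ‖x‖ = n}.ncard : ℝ) ≤
      Fintype.card ι * 2 * (2 * (r + R) + 1) ^ (Fintype.card ι - 1) := fun n hn => by
    have hn : (n : ℝ) ≤ r + R := (Nat.le_floor_iff (by positivity)).1 (Finset.mem_Icc.1 hn).2
    calc ({x : ι → ℤ | ‖x‖ = n}.ncard : ℝ)
        ≤ Fintype.card ι * 2 * (2 * n + 1) ^ (Fintype.card ι - 1) := by
          exact_mod_cast ncard_sphere_int_pi_le n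
      _ ≤ _ := by gcongr
  have hfin : (⋃ n ∈ radii, {x : ι → ℤ | ‖x‖ = n}).Finite :=
    (Finset.finite_toSet radii).biUnion fun n _ =>
      ((isCompact_sphere (0 : ι → ℤ) n).finite_of_discrete.subset fun x hx => by simpa using hx)
  calc ((latticeAnnulus ι r R).ncard : ℝ)
      ≤ ∑ n ∈ radii, ({x : ι → ℤ | ‖x‖ = n}.ncard : ℝ) := by
        exact_mod_cast (Set.ncard_le_ncard hcover hfin).trans (radii.set_ncard_biUnion_le _)
    _ ≤ radii.card * (Fintype.card ι * 2 * (2 * (r + R) + 1) ^ (Fintype.card ι - 1)) :=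
        (Finset.sum_le_card_nsmul _ _ _ hsphere).trans_eq (nsmul_eq_mul _ _)
    _ ≤ _ := by gcongr

end LatticeCounting

/-! ### Local finiteness of the cutters -/

section Radii

variable {d : ℕ}

theorem rr_pos (d j : ℕ) : 0 < rr d j := by
  unfold rr
  positivity

theorem rr_sub_half_pow (hd : 1 ≤ d) (j : ℕ) : (rr d j - 1 / 2) ^ d = 2 ^ j * (j : ℝ) ^ 2 := by
  rw [rr, add_sub_cancel_right, Real.rpow_inv_natCast_pow (by positivity) (by omega)]

theorem rr_ne_intCast (hd : 1 ≤ d) (j : ℕ) (m : ℤ) : rr d j ≠ m := fun h => by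
  -- An odd integer would equal `2 ^ d` times an integer.
  have hodd : Odd ((2 * m - 1) ^ d) := Odd.pow ⟨m - 1, by ring⟩
  have heq : (2 * m - 1) ^ d = 2 ^ d * (2 ^ j * (j : ℤ) ^ 2) := by
    have : (2 * (m : ℝ) - 1) ^ d = 2 ^ d * (2 ^ j * (j : ℝ) ^ 2) := by
      rw [← rr_sub_half_pow hd, h, ← mul_pow]
      ring
    exact_mod_cast this
  have heven : Even ((2 : ℤ) ^ d * (2 ^ j * (j : ℤ) ^ 2)) :=
    (even_two.pow_of_ne_zero (by omega)).mul_right _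
  exact Int.not_even_iff_odd.2 hodd (heq ▸ heven)

theorem rpow_inv_pow_le_rr_sub_half (hd : 1 ≤ d) {j : ℕ} (hj : 1 ≤ j) :
    ((2 : ℝ) ^ (d : ℝ)⁻¹) ^ j ≤ rr d j - 1 / 2 := by
  rw [rr, add_sub_cancel_right, ← Real.rpow_natCast, ← Real.rpow_mul zero_le_two, mul_comm,
    Real.rpow_natCast_mul zero_le_two]
  have hj' : (1 : ℝ) ≤ (j : ℝ) ^ 2 := one_le_pow₀ (by exact_mod_cast hj)
  gcongr
  exact le_mul_of_one_le_right (by positivity) hj'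

theorem one_lt_two_rpow_inv_natCast (hd : 1 ≤ d) : (1 : ℝ) < 2 ^ (d : ℝ)⁻¹ :=
  Real.one_lt_rpow one_lt_two (by positivity)

theorem one_le_rr_sub_half (hd : 1 ≤ d) {j : ℕ} (hj : 1 ≤ j) : 1 ≤ rr d j - 1 / 2 :=
  (one_le_pow₀ (one_lt_two_rpow_inv_natCast hd).le).trans (rpow_inv_pow_le_rr_sub_half hd hj)

theorem rr_sub_half_pow_pred_mul_half_pow_le (hd : 1 ≤ d) {j : ℕ} (hj : 1 ≤ j) :
    (rr d j - 1 / 2) ^ (d - 1) * (1 / 2) ^ j ≤ (j : ℝ) ^ 2 * ((2 : ℝ) ^ (d : ℝ)⁻¹)⁻¹ ^ j := by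
  have hpos : 0 ≤ rr d j - 1 / 2 := zero_le_one.trans (one_le_rr_sub_half hd hj)
  rw [inv_pow, ← div_eq_mul_inv, le_div_iff₀ (by positivity)]
  calc (rr d j - 1 / 2) ^ (d - 1) * (1 / 2) ^ j * (2 ^ (d : ℝ)⁻¹) ^ j
      ≤ (rr d j - 1 / 2) ^ (d - 1) * (1 / 2) ^ j * (rr d j - 1 / 2) := by
        gcongr
        exact rpow_inv_pow_le_rr_sub_half hd hj
    _ = (1 / 2) ^ j * (rr d j - 1 / 2) ^ (d - 1 + 1) := by ring
    _ = (1 / 2 * 2) ^ j * (j : ℝ) ^ 2 := by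
        rw [Nat.sub_add_cancel hd, rr_sub_half_pow hd, mul_pow, mul_assoc]
    _ = (j : ℝ) ^ 2 := by norm_num

theorem ncard_latticeAnnulus_rr_mul_half_pow_le (hd : 1 ≤ d) {R : ℝ} (hR : 0 ≤ R) {j : ℕ}
    (hj : 1 ≤ j) :
    ((latticeAnnulus (Fin d) (rr d j) R).ncard : ℝ) * (1 / 2) ^ j ≤
      (2 * R + 1) * (d * 2 * (2 * R + 4) ^ (d - 1)) *
        ((j : ℝ) ^ 2 * ((2 : ℝ) ^ (d : ℝ)⁻¹)⁻¹ ^ j) := by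
  have : Nonempty (Fin d) := ⟨⟨0, hd⟩⟩
  have hside0 : 0 ≤ 2 * (rr d j + R) + 1 := by linarith [rr_pos d j]
  have hside : 2 * (rr d j + R) + 1 ≤ (2 * R + 4) * (rr d j - 1 / 2) := by
    nlinarith [mul_le_mul_of_nonneg_left (one_le_rr_sub_half hd hj) hR, one_le_rr_sub_half hd hj]
  calc ((latticeAnnulus (Fin d) (rr d j) R).ncard : ℝ) * (1 / 2) ^ j
      ≤ (2 * R + 1) * (d * 2 * (2 * (rr d j + R) + 1) ^ (d - 1)) * (1 / 2) ^ j := by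
        gcongr
        simpa using ncard_latticeAnnulus_le (ι := Fin d) (rr_pos d j).le hR
    _ ≤ (2 * R + 1) * (d * 2 * ((2 * R + 4) * (rr d j - 1 / 2)) ^ (d - 1)) * (1 / 2) ^ j := by
        gcongr
    _ = (2 * R + 1) * (d * 2 * (2 * R + 4) ^ (d - 1)) *
          ((rr d j - 1 / 2) ^ (d - 1) * (1 / 2) ^ j) := by
        rw [mul_pow]
        ring
    _ ≤ _ := mul_le_mul_of_nonneg_left (rr_sub_half_pow_pred_mul_half_pow_le hd hj) (by positivity)

theorem summable_ncard_latticeAnnulus_rr (hd : 1 ≤ d) {R : ℝ} (hR : 0 ≤ R) :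
    Summable fun j : ℕ => ((latticeAnnulus (Fin d) (rr d j) R).ncard : ℝ) * (1 / 2) ^ j := by
  have hratio : ‖((2 : ℝ) ^ (d : ℝ)⁻¹)⁻¹‖ < 1 := by
    rw [norm_inv, Real.norm_of_nonneg (by positivity)]
    exact inv_lt_one_of_one_lt₀ (one_lt_two_rpow_inv_natCast hd)
  refine ((summable_pow_mul_geometric_of_norm_lt_one 2 hratio).mul_left
    ((2 * R + 1) * (d * 2 * (2 * R + 4) ^ (d - 1)))).of_norm_bounded_eventually_nat ?_
  filter_upwards [Filter.eventually_ge_atTop 1] with j hj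
  rw [Real.norm_of_nonneg (by positivity)]
  exact ncard_latticeAnnulus_rr_mul_half_pow_le hd hR hj

end Radii

section LocalFiniteness

variable {d : ℕ}

theorem norm_toR (x : Site d) : ‖toR x‖ = ‖x‖ := by
  have hcoord : (fun i => ‖toR x i‖₊) = fun i => ‖x i‖₊ :=
    funext fun i => NNReal.eq (Int.norm_cast_real (x i))
  rw [Pi.norm_def, Pi.norm_def, hcoord]

theorem toR_add (x y : Site d) : toR (x + y) = toR x + toR y := by
  ext i
  simp [toR]

theorem toR_sub (x y : Site d) : toR (x - y) = toR x - toR y := by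
  ext i
  simp [toR]

/-- The complement of the cutters of index above `k`, whose connected components are the
`k`-blobs. -/
def uncut (γ : Config d) (k : ℕ) : Set (Fin d → ℝ) := (⋃ j ∈ {j : ℕ | k < j}, cutters γ j)ᶜ

theorem mem_clump_iff {γ : Config d} {k : ℕ} {x y : Site d} :
    y ∈ clump γ k x ↔ toR y ∈ connectedComponentIn (uncut γ k) (toR x) := .rfl

theorem mem_uncut_iff {γ : Config d} {k : ℕ} {p : Fin d → ℝ} :
    p ∈ uncut γ k ↔ ∀ j, k < j → ∀ x : Site d, IsSeed γ j (x - ss d j) → ‖p - toR x‖ ≠ rr d j := by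
  simp [uncut, cutters]

theorem IsBernoulliHalfProduct.ae_eventually_forall_latticeAnnulus_not_isSeed (hd : 1 ≤ d)
    {P : Measure (Config d)} (hP : IsBernoulliHalfProduct P) {R : ℝ} (hR : 0 ≤ R) :
    ∀ᵐ γ ∂P, ∀ᶠ j in Filter.atTop, ∀ x ∈ latticeAnnulus (Fin d) (rr d j) R,
      ¬ IsSeed γ j (x - ss d j) := by
  let seedNear (j : ℕ) : Set (Config d) :=
    ⋃ x ∈ (finite_latticeAnnulus (ι := Fin d) (rr d j) R).toFinset, {γ | IsSeed γ j (x - ss d j)}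
  have hbound (j : ℕ) : P (seedNear j) ≤
      ENNReal.ofReal ((latticeAnnulus (Fin d) (rr d j) R).ncard * (1 / 2) ^ j) := calc
    P (seedNear j)
      ≤ (finite_latticeAnnulus (ι := Fin d) (rr d j) R).toFinset.card • (1 / 2 : ℝ≥0∞) ^ j :=
        (measure_biUnion_finset_le _ _).trans <|
          Finset.sum_le_card_nsmul _ _ _ fun x _ => hP.measure_isSeed_le hd j _
    _ = _ := by
      rw [← Set.ncard_eq_toFinset_card _ (finite_latticeAnnulus _ _), nsmul_eq_mul,
        ENNReal.ofReal_mul (by positivity), ENNReal.ofReal_natCast,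
        ENNReal.ofReal_pow (by positivity), ENNReal.ofReal_div_of_pos zero_lt_two]
      simp
  have hae : ∀ᵐ γ ∂P, ∀ᶠ j in Filter.atTop, γ ∉ seedNear j :=
    ae_eventually_notMem <| ne_top_of_le_ne_top
      (summable_ncard_latticeAnnulus_rr hd hR).tsum_ofReal_ne_top (ENNReal.tsum_le_tsum hbound)
  filter_upwards [hae] with γ hγ
  filter_upwards [hγ] with j hj x hx hseed
  exact hj (Set.mem_biUnion ((finite_latticeAnnulus _ _).mem_toFinset.2 hx) hseed)

theorem mem_latticeAnnulus_of_sphere_inter_closedBall {x : Site d} {p : Fin d → ℝ} {r R : ℝ}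
    (hsphere : ‖p - toR x‖ = r) (hball : ‖p‖ ≤ R) : x ∈ latticeAnnulus (Fin d) r R := by
  have hdist : |‖x‖ - r| ≤ ‖p‖ := by
    rw [← norm_toR, ← hsphere, norm_sub_rev]
    simpa using abs_norm_sub_norm_le (toR x) (toR x - p)
  exact hdist.trans hball

theorem isOpen_uncut_of_eventually_not_isSeed {γ : Config d}
    (hγ : ∀ R : ℕ, ∀ᶠ j in Filter.atTop, ∀ x ∈ latticeAnnulus (Fin d) (rr d j) R,
      ¬ IsSeed γ j (x - ss d j)) (k : ℕ) : IsOpen (uncut γ k) := by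
  let sphere (i : {i : ℕ × Site d // k < i.1 ∧ IsSeed γ i.1 (i.2 - ss d i.1)}) :
    Set (Fin d → ℝ) := {p | ‖p - toR i.1.2‖ = rr d i.1.1}
  have huncut : uncut γ k = (⋃ i, sphere i)ᶜ := by
    ext p
    simp only [mem_uncut_iff, sphere, Set.mem_compl_iff, Set.mem_iUnion, Set.mem_ofPred_eq,
      Subtype.exists, Prod.exists, not_exists, exists_prop, not_and, and_imp, ne_eq]
    exact forall_congr' fun j => forall_comm
  have hclosed (i) : IsClosed (sphere i) := isClosed_eq (by fun_prop) continuous_const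
  rw [huncut, isOpen_compl_iff]
  refine LocallyFinite.isClosed_iUnion (fun p => ?_) hclosed
  obtain ⟨R, hR⟩ := exists_nat_ge (‖p‖ + 1)
  obtain ⟨J, hJ⟩ := Filter.eventually_atTop.1 (hγ R)
  refine ⟨Metric.ball p 1, Metric.ball_mem_nhds p one_pos, ?_⟩
  have hfin : (⋃ j ∈ Set.Iio J, (fun x => (j, x)) '' latticeAnnulus (Fin d) (rr d j) R).Finite :=
    (Set.finite_Iio J).biUnion fun j _ => (finite_latticeAnnulus _ _).image _
  refine (hfin.preimage (f := Subtype.val) Subtype.val_injective.injOn).subset ?_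
  rintro ⟨⟨j, x⟩, hkj, hseed⟩ ⟨q, hq : ‖q - toR x‖ = rr d j, hqp⟩
  have hqR : ‖q‖ ≤ R := by
    have hqp' : ‖q - p‖ < 1 := by rwa [← dist_eq_norm]
    linarith [norm_sub_norm_le q p]
  have hx := mem_latticeAnnulus_of_sphere_inter_closedBall hq hqR
  have hjJ : j < J := not_le.1 fun h => hJ j h x hx hseed
  exact Set.mem_biUnion hjJ (Set.mem_image_of_mem _ hx)

theorem IsBernoulliHalfProduct.ae_isOpen_uncut (hd : 1 ≤ d) {P : Measure (Config d)}
    (hP : IsBernoulliHalfProduct P) (k : ℕ) : ∀ᵐ γ ∂P, IsOpen (uncut γ k) := by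
  have hae (R : ℕ) :=
    hP.ae_eventually_forall_latticeAnnulus_not_isSeed hd (Nat.cast_nonneg (α := ℝ) R)
  filter_upwards [ae_all_iff.2 hae] with γ hγ
  exact isOpen_uncut_of_eventually_not_isSeed hγ k

end LocalFiniteness

/-! ### Clumps -/

section Clumps

variable {d : ℕ} {γ : Config d} {j k : ℕ}

theorem isSeed_shiftCfg {x z : Site d} : IsSeed (shiftCfg z γ) j (x + z) ↔ IsSeed γ j x := by
  simp only [IsSeed, shiftCfg, add_sub_cancel_right, add_right_comm x z]

theorem add_toR_mem_uncut_shiftCfg {z : Site d} {p : Fin d → ℝ} :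
    p + toR z ∈ uncut (shiftCfg z γ) k ↔ p ∈ uncut γ k := by
  simp only [mem_uncut_iff]
  refine forall₂_congr fun j _ => ((Equiv.addRight z).forall_congr fun x => ?_).symm
  simp only [Equiv.coe_addRight, add_sub_right_comm x z, isSeed_shiftCfg, toR_add,
    add_sub_add_right_eq_sub]

theorem image_addRight_uncut (z : Site d) :
    Homeomorph.addRight (toR z) '' uncut γ k = uncut (shiftCfg z γ) k := by
  ext p
  obtain ⟨q, rfl⟩ := (Homeomorph.addRight (toR z)).surjective p
  rw [(Homeomorph.addRight (toR z)).injective.mem_set_image]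
  exact add_toR_mem_uncut_shiftCfg.symm

theorem toR_mem_uncut (hd : 1 ≤ d) (γ : Config d) (k : ℕ) (x : Site d) : toR x ∈ uncut γ k := by
  refine mem_uncut_iff.2 fun j _ y _ h => ?_
  have : Nonempty (Fin d) := ⟨⟨0, hd⟩⟩
  obtain ⟨i, hi⟩ := exists_natAbs_eq_norm (x - y)
  rw [← toR_sub, norm_toR, hi] at h
  exact rr_ne_intCast hd j ((x - y) i).natAbs (h.symm.trans (Int.cast_natCast _).symm)

/-- The partition of the lattice into `k`-clumps. -/
def clumpSetoid (hd : 1 ≤ d) (γ : Config d) (k : ℕ) : Setoid (Site d) where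
  r x y := y ∈ clump γ k x
  iseqv :=
    { refl x := mem_connectedComponentIn (toR_mem_uncut hd γ k x)
      symm {x y} h := by
        rw [mem_clump_iff, ← connectedComponentIn_eq (mem_clump_iff.1 h)]
        exact mem_connectedComponentIn (toR_mem_uncut hd γ k x)
      trans {x y z} hxy hyz := by
        rw [mem_clump_iff, connectedComponentIn_eq (mem_clump_iff.1 hxy)]
        exact hyz }

theorem clump_eq_of_mem (hd : 1 ≤ d) {x y : Site d} (h : y ∈ clump γ k x) :
    clump γ k y = clump γ k x :=
  let S := clumpSetoid hd γ k
  Set.ext fun _ => ⟨S.trans h, S.trans (S.symm h)⟩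

theorem add_mem_clump_shiftCfg (hd : 1 ≤ d) {x y z : Site d} :
    y + z ∈ clump (shiftCfg z γ) k (x + z) ↔ y ∈ clump γ k x := by
  have himage := (Homeomorph.addRight (toR z)).image_connectedComponentIn (toR_mem_uncut hd γ k x)
  rw [image_addRight_uncut] at himage
  rw [mem_clump_iff, mem_clump_iff, toR_add, toR_add]
  exact himage ▸ (Homeomorph.addRight (toR z)).injective.mem_set_image

theorem measurableSet_isSeed (j : ℕ) (x : Site d) :
    MeasurableSet {γ : Config d | IsSeed γ j x} := by
  unfold IsSeed
  measurability

theorem measurableSet_subset_uncut (k : ℕ) (V : Set (Fin d → ℝ)) :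
    MeasurableSet {γ : Config d | V ⊆ uncut γ k} := by
  have hiff (γ : Config d) : V ⊆ uncut γ k ↔ ∀ j x, (k < j ∧ ∃ p ∈ V, ‖p - toR x‖ = rr d j) →
      ¬ IsSeed γ j (x - ss d j) := by
    simp only [Set.subset_def, mem_uncut_iff]
    grind
  simp only [hiff, Set.ofPred_forall]
  exact .iInter fun j => .iInter fun x => .iInter fun _ => (measurableSet_isSeed j _).compl

variable {P : Measure (Config d)}

theorem nullMeasurableSet_mem_clump (hopen : ∀ᵐ γ ∂P, IsOpen (uncut γ k)) (x y : Site d) :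
    NullMeasurableSet {γ | y ∈ clump γ k x} P :=
  nullMeasurableSet_mem_connectedComponentIn hopen (measurableSet_subset_uncut k) (toR x) (toR y)

theorem nullMeasurableSet_notMem_clump (hopen : ∀ᵐ γ ∂P, IsOpen (uncut γ k))
    {φ : Config d → Site d} (hφ : Measurable φ) (x : Site d) :
    NullMeasurableSet {γ | φ γ ∉ clump γ k x} P := by
  have hunion : {γ | φ γ ∉ clump γ k x} = ⋃ y, φ ⁻¹' {y} ∩ {γ | y ∈ clump γ k x}ᶜ := by
    ext γ
    simp
  rw [hunion]
  exact .iUnion fun y => (hφ (measurableSet_singleton y)).nullMeasurableSet.inter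
    (nullMeasurableSet_mem_clump hopen x y).compl

end Clumps

theorem statement9_general {d : ℕ} (hd : 1 ≤ d) {P : Measure (Config d)}
    (hshift : ∀ z, MeasurePreserving (shiftCfg z) P P)
    {k : ℕ} (hk : 1 ≤ k) (hopen : ∀ᵐ γ ∂P, IsOpen (uncut γ k))
    {Φ : Config d → Site d → Site d} (hΦ : ∀ x, Measurable fun γ => Φ γ x)
    (heq : IsEquivariant P Φ) (hmax : MatchesMaximally P Φ) :
    (P {γ | Φ γ 0 ∉ clump γ k 0}).toReal
      = ∫ γ, (1 / ((clump γ k 0).ncard : ℝ))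
          * ((∑ᶠ y ∈ clump γ k 0, pm1 γ y).natAbs : ℝ) ∂P := by
  let bad (γ : Config d) : Set (Site d) := {x | Φ γ x ∉ clump γ k x}
  have hbad (z x : Site d) : ∀ᵐ γ ∂P, x + z ∈ bad (shiftCfg z γ) ↔ x ∈ bad γ := by
    filter_upwards [heq z x] with γ hγ
    simp only [bad, Set.mem_ofPred_eq, hγ, add_mem_clump_shiftCfg hd]
  calc (P {γ | Φ γ 0 ∉ clump γ k 0}).toReal
      = ∫ γ, ({x ∈ bad γ | x ∈ clump γ k 0}.ncard : ℝ) / (clump γ k 0).ncard ∂P :=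
        measureReal_mem_eq_integral_ncard_div_ncard (C := fun γ => clumpSetoid hd γ k) hshift
          (nullMeasurableSet_mem_clump hopen)
          (fun x => nullMeasurableSet_notMem_clump hopen (hΦ x) x)
          (fun z => .of_forall fun γ x y => add_mem_clump_shiftCfg hd) hbad
          (hmax.mono fun γ hγ => (hγ k hk 0).1)
    _ = _ := by
        refine integral_congr_ae ?_
        filter_upwards [hmax] with γ hγ
        have hcount : {x ∈ bad γ | x ∈ clump γ k 0} =
            {y ∈ clump γ k 0 | Φ γ y ∉ clump γ k 0} :=
          Set.ext fun y => and_comm.trans <| and_congr_right fun hy => by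
            simp only [bad, Set.mem_ofPred_eq, clump_eq_of_mem hd hy]
        have hmax0 := (hγ k hk 0).2
        rw [Int.abs_eq_natAbs, Nat.cast_inj] at hmax0
        rw [hcount, hmax0, one_div_mul_eq_div]

/-- For every `k ≥ 1` the probability that the origin is `k`-bad equals
`E[(1/|L_k|) |Σ_{x ∈ L_k} (2γ(x) - 1)|]`. -/
theorem statement9 (d : ℕ) (hd : 1 ≤ d)
    (P : Measure (Config d)) (hP : IsBernoulliHalfProduct P)
    (Φ : Config d → Site d → Site d)
    (hΦ : IsMatchingRule P Φ) (heq : IsEquivariant P Φ)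
    (hmax : MatchesMaximally P Φ) :
    ∀ k : ℕ, 1 ≤ k →
      (P {γ | Φ γ 0 ∉ clump γ k 0}).toReal
        = ∫ γ, (1 / ((clump γ k 0).ncard : ℝ))
            * ((∑ᶠ y ∈ clump γ k 0, pm1 γ y).natAbs : ℝ) ∂P :=
  fun _ hk => statement9_general hd hP.measurePreserving_shiftCfg hk (hP.ae_isOpen_uncut hd _)
    hΦ.1 heq hmax

end
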